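/- Let D = B_R(x₀) ⊂ ℝ² and f ∈ L¹(D). Then the Neumann problem −Δu + u = f in D, ∂u/∂n = 0 on ∂D admits a weak solution u ∈ W^{1,1}(D) satisfying ‖u‖_{W^{1,1}(D)} ≤ C ‖f‖_{L¹(D)}, where C depends only on R. -/

import Mathlib

open MeasureTheory Metric
open scoped ENNReal

/-- `Du` is the weak gradient of `u` on the open set `D`. -/
def IsWeakGrad (D : Set (EuclideanSpace ℝ (Fin 2))) (u : EuclideanSpace ℝ (Fin 2) → ℝ)
    (Du : EuclideanSpace ℝ (Fin 2) → Fin 2 → ℝ) : Prop :=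
  ∀ φ : EuclideanSpace ℝ (Fin 2) → ℝ, ContDiff ℝ (⊤ : ℕ∞) φ → HasCompactSupport φ →
    tsupport φ ⊆ D → ∀ i : Fin 2,
      ∫ x in D, u x * fderiv ℝ φ x (EuclideanSpace.single i (1 : ℝ))
        = - ∫ x in D, Du x i * φ x

lemma lintegral_comp_affine_le {D : Set (EuclideanSpace ℝ (Fin 2))} (hD : MeasurableSet D) {a : ℝ}
    (ha : 0 < a) (c : EuclideanSpace ℝ (Fin 2)) (hmap : ∀ x ∈ D, a • x + c ∈ D)
    {H : EuclideanSpace ℝ (Fin 2) → ℝ≥0∞} (hH : Measurable H) :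
    ∫⁻ x in D, H (a • x + c) ≤ ENNReal.ofReal ((a ^ 2)⁻¹) * ∫⁻ x in D, H x := by
  have hHD : Measurable (D.indicator H) := hH.indicator hD
  calc ∫⁻ x in D, H (a • x + c) ≤ ∫⁻ x in D, D.indicator H (a • x + c) := by
        refine setLIntegral_mono' hD fun x hx => ?_
        rw [Set.indicator_of_mem (hmap x hx)]
    _ ≤ ∫⁻ x, D.indicator H (a • x + c) := setLIntegral_le_lintegral _ _
    _ = ∫⁻ y, D.indicator H (y + c)
          ∂(Measure.map (a • ·) (volume : Measure (EuclideanSpace ℝ (Fin 2)))) := by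
        rw [lintegral_map (f := fun y => D.indicator H (y + c))
          (hHD.comp (measurable_add_const c)) (measurable_const_smul a)]
    _ = ENNReal.ofReal ((a ^ 2)⁻¹) * ∫⁻ x in D, H x := by
        rw [Measure.map_addHaar_smul _ ha.ne', lintegral_smul_measure,
          lintegral_add_right_eq_self (D.indicator H) c, lintegral_indicator hD]
        simp [abs_of_pos ha]

lemma lintegral_lintegral_segment_le {D : Set (EuclideanSpace ℝ (Fin 2))} (hD : MeasurableSet D)
    (hc : Convex ℝ D) {H W k : EuclideanSpace ℝ (Fin 2) → ℝ≥0∞} (hH : Measurable H)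
    (hk : Measurable k) {τ : ℝ} (hτ : 0 < τ) (hτ' : τ < 1)
    (hW : ∀ x, W x ≤ ENNReal.ofReal (τ ^ (3 / 2 : ℝ)) * k x + ENNReal.ofReal (τ ^ (-1 / 2 : ℝ))) :
    ∫⁻ x in D, ∫⁻ z in D, W x * H (x + τ • (z - x)) ≤
      ENNReal.ofReal (τ ^ (-1 / 2 : ℝ)) *
        ((∫⁻ x in D, H x) * ((∫⁻ x in D, k x) + 4 * volume D)) := by
  have hHm : Measurable fun p : EuclideanSpace ℝ (Fin 2) × EuclideanSpace ℝ (Fin 2) =>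
      H (p.1 + τ • (p.2 - p.1)) := hH.comp (by fun_prop)
  have hz : ∀ x ∈ D, ∫⁻ z in D, H (x + τ • (z - x)) ≤
      ENNReal.ofReal ((τ ^ 2)⁻¹) * ∫⁻ x in D, H x := by
    intro x hx
    have e : ∀ z, x + τ • (z - x) = τ • z + (1 - τ) • x := fun z => by module
    simp only [e]
    exact lintegral_comp_affine_le hD hτ _
      (fun z hz => hc hz hx hτ.le (by linarith) (by ring)) hH
  have hx : ∀ z ∈ D, ∫⁻ x in D, H (x + τ • (z - x)) ≤
      ENNReal.ofReal (((1 - τ) ^ 2)⁻¹) * ∫⁻ x in D, H x := by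
    intro z hz
    have e : ∀ x, x + τ • (z - x) = (1 - τ) • x + τ • z := fun z => by module
    simp only [e]
    exact lintegral_comp_affine_le hD (by linarith) _
      (fun x hx => hc hx hz (by linarith) hτ.le (by ring)) hH
  have h4 : ∫⁻ x in D, ∫⁻ z in D, H (x + τ • (z - x)) ≤ (∫⁻ x in D, H x) * (4 * volume D) := by
    have key : ∀ {b : ℝ}, 1 / 2 ≤ b → ENNReal.ofReal ((b ^ 2)⁻¹) ≤ 4 := fun {b} hb => by
      refine ENNReal.ofReal_le_of_le_toReal ?_
      have : (b ^ 2)⁻¹ ≤ ((1 / 2 : ℝ) ^ 2)⁻¹ := by gcongr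
      simpa using this.trans (by norm_num)
    have fin : ∀ F : EuclideanSpace ℝ (Fin 2) → ℝ≥0∞, (∀ x ∈ D, F x ≤ 4 * ∫⁻ x in D, H x) →
        ∫⁻ x in D, F x ≤ (∫⁻ x in D, H x) * (4 * volume D) := fun F hF => by
      refine (setLIntegral_mono' hD hF).trans (le_of_eq ?_)
      rw [setLIntegral_const]; ring
    rcases le_total (1 / 2) τ with h | h
    · exact fin _ fun x hx => (hz x hx).trans (by gcongr; exact key h)
    · rw [lintegral_lintegral_swap hHm.aemeasurable]
      exact fin _ fun z hz => (hx z hz).trans (by gcongr; exact key (by linarith))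
  have hτpow : ENNReal.ofReal (τ ^ (3 / 2 : ℝ)) * ENNReal.ofReal ((τ ^ 2)⁻¹) =
      ENNReal.ofReal (τ ^ (-1 / 2 : ℝ)) := by
    rw [← ENNReal.ofReal_mul (by positivity), ← Real.rpow_natCast, ← Real.rpow_neg hτ.le,
      ← Real.rpow_add hτ]
    norm_num
  set T := ENNReal.ofReal (τ ^ (-1 / 2 : ℝ))
  calc ∫⁻ x in D, ∫⁻ z in D, W x * H (x + τ • (z - x))
      ≤ ∫⁻ x in D, (T * (∫⁻ x in D, H x) * k x + T * ∫⁻ z in D, H (x + τ • (z - x))) := by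
        refine setLIntegral_mono' hD fun x hx => ?_
        have hHx : Measurable fun z => H (x + τ • (z - x)) := hHm.comp measurable_prodMk_left
        rw [lintegral_const_mul _ hHx]
        calc W x * ∫⁻ z in D, H (x + τ • (z - x))
            ≤ (ENNReal.ofReal (τ ^ (3 / 2 : ℝ)) * k x + T) * ∫⁻ z in D, H (x + τ • (z - x)) := by
              gcongr; exact hW x
          _ ≤ ENNReal.ofReal (τ ^ (3 / 2 : ℝ)) * k x *
                (ENNReal.ofReal ((τ ^ 2)⁻¹) * ∫⁻ x in D, H x) +
                T * ∫⁻ z in D, H (x + τ • (z - x)) := by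
              rw [add_mul]; gcongr; exact hz x hx
          _ = _ := by rw [← hτpow]; ring
    _ = T * (∫⁻ x in D, H x) * (∫⁻ x in D, k x) +
          T * ∫⁻ x in D, ∫⁻ z in D, H (x + τ • (z - x)) := by
        rw [lintegral_add_left (hk.const_mul _), lintegral_const_mul _ hk,
          lintegral_const_mul _ hHm.lintegral_prod_right']
    _ ≤ T * (∫⁻ x in D, H x) * (∫⁻ x in D, k x) + T * ((∫⁻ x in D, H x) * (4 * volume D)) := by
        gcongr
    _ = _ := by ring

lemma lintegral_rpow_neg_half :
    ∫⁻ τ in Set.Ioo (0 : ℝ) 1, ENNReal.ofReal (τ ^ (-1 / 2 : ℝ)) = 2 := by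
  have hi : IntervalIntegrable (fun τ : ℝ => τ ^ (-1 / 2 : ℝ)) volume 0 1 :=
    intervalIntegral.intervalIntegrable_rpow' (by norm_num)
  rw [intervalIntegrable_iff_integrableOn_Ioo_of_le zero_le_one] at hi
  rw [← ofReal_integral_eq_lintegral_ofReal hi, ← integral_Ioc_eq_integral_Ioo,
    ← intervalIntegral.integral_of_le zero_le_one, integral_rpow (Or.inl (by norm_num))]
  · norm_num
  · exact (ae_restrict_mem measurableSet_Ioo).mono fun τ hτ => Real.rpow_nonneg hτ.1.le _

lemma enorm_le_enorm_add_lintegral_fderiv {v : EuclideanSpace ℝ (Fin 2) → ℝ}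
    (hv : ContDiff ℝ 1 v) {d : ℝ} {x z : EuclideanSpace ℝ (Fin 2)} (hd : ‖z - x‖ ≤ d) :
    ‖v x‖ₑ ≤ ‖v z‖ₑ + ENNReal.ofReal d *
      ∫⁻ τ in Set.Ioo (0 : ℝ) 1, ‖fderiv ℝ v (x + τ • (z - x))‖ₑ := by
  have hcont : Continuous fun τ : ℝ => fderiv ℝ v (x + τ • (z - x)) :=
    (hv.continuous_fderiv one_ne_zero).comp (by fun_prop)
  have hder : ∀ τ : ℝ, HasDerivAt (fun τ : ℝ => v (x + τ • (z - x)))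
      (fderiv ℝ v (x + τ • (z - x)) (z - x)) τ := by
    intro τ
    have h1 : HasDerivAt (fun τ : ℝ => x + τ • (z - x)) (z - x) τ := by
      simpa using ((hasDerivAt_id τ).smul_const (z - x)).const_add x
    exact ((hv.differentiable one_ne_zero) _).hasFDerivAt.comp_hasDerivAt τ h1
  have hftc := intervalIntegral.integral_eq_sub_of_hasDerivAt (a := 0) (b := 1)
    (fun τ _ => hder τ) ((hcont.clm_apply continuous_const).intervalIntegrable _ _)
  simp only [one_smul, zero_smul, add_zero, add_sub_cancel] at hftc
  have e : v x = v z - (v z - v x) := by ring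
  calc ‖v x‖ₑ ≤ ‖v z‖ₑ + ‖v z - v x‖ₑ := by
        conv_lhs => rw [e]
        exact enorm_sub_le
    _ ≤ _ := by
        gcongr
        rw [← hftc, intervalIntegral.integral_of_le zero_le_one, integral_Ioc_eq_integral_Ioo]
        refine (enorm_integral_le_lintegral_enorm _).trans ?_
        rw [← lintegral_const_mul _ hcont.enorm.measurable]
        refine lintegral_mono fun τ => ?_
        rw [mul_comm, ← ofReal_norm, ← ofReal_norm,
          ← ENNReal.ofReal_mul (norm_nonneg _)]
        refine ENNReal.ofReal_le_ofReal ((ContinuousLinearMap.le_opNorm _ _).trans ?_)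
        gcongr

/-- A weighted Poincaré–Sobolev inequality on convex planar sets. -/
lemma volume_mul_lintegral_enorm_mul_weight_le {D : Set (EuclideanSpace ℝ (Fin 2))}
    (hD : MeasurableSet D) (hc : Convex ℝ D) {d : ℝ} (hd : ∀ x ∈ D, ∀ z ∈ D, ‖z - x‖ ≤ d)
    {v : EuclideanSpace ℝ (Fin 2) → ℝ} (hv : ContDiff ℝ 1 v)
    {W k : EuclideanSpace ℝ (Fin 2) → ℝ≥0∞} (hWm : Measurable W) (hk : Measurable k)
    (hW : ∀ τ : ℝ, 0 < τ → τ < 1 → ∀ x,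
      W x ≤ ENNReal.ofReal (τ ^ (3 / 2 : ℝ)) * k x + ENNReal.ofReal (τ ^ (-1 / 2 : ℝ))) :
    volume D * ∫⁻ x in D, ‖v x‖ₑ * W x ≤
      (∫⁻ x in D, ‖v x‖ₑ) * (∫⁻ x in D, W x) +
        ENNReal.ofReal d * (2 * ((∫⁻ x in D, ‖fderiv ℝ v x‖ₑ) *
          ((∫⁻ x in D, k x) + 4 * volume D))) := by
  have hvm : Measurable fun x => ‖v x‖ₑ := hv.continuous.enorm.measurable
  set H : EuclideanSpace ℝ (Fin 2) → ℝ≥0∞ := fun x => ‖fderiv ℝ v x‖ₑ with hHdef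
  have hH : Measurable H := (hv.continuous_fderiv one_ne_zero).enorm.measurable
  have hmeas : Measurable fun p : (EuclideanSpace ℝ (Fin 2) × EuclideanSpace ℝ (Fin 2)) × ℝ =>
      W p.1.1 * H (p.1.1 + p.2 • (p.1.2 - p.1.1)) :=
    (hWm.comp (by fun_prop)).mul (hH.comp (by fun_prop))
  have hHseg : ∀ x z, Measurable fun τ : ℝ => H (x + τ • (z - x)) := fun x z =>
    hH.comp (by fun_prop)
  have hswap : ∫⁻ x in D, ∫⁻ z in D, ∫⁻ τ in Set.Ioo (0 : ℝ) 1, W x * H (x + τ • (z - x)) =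
      ∫⁻ τ in Set.Ioo (0 : ℝ) 1, ∫⁻ x in D, ∫⁻ z in D, W x * H (x + τ • (z - x)) := by
    have h1 : ∀ x, ∫⁻ z in D, ∫⁻ τ in Set.Ioo (0 : ℝ) 1, W x * H (x + τ • (z - x)) =
        ∫⁻ τ in Set.Ioo (0 : ℝ) 1, ∫⁻ z in D, W x * H (x + τ • (z - x)) := fun x =>
      lintegral_lintegral_swap
        (hmeas.comp (f := fun q : EuclideanSpace ℝ (Fin 2) × ℝ => ((x, q.1), q.2))
          (by fun_prop)).aemeasurable
    simp only [h1]
    refine lintegral_lintegral_swap (Measurable.aemeasurable ?_)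
    exact (hmeas.comp (f := fun q : (EuclideanSpace ℝ (Fin 2) × ℝ) × EuclideanSpace ℝ (Fin 2) =>
      ((q.1.1, q.2), q.1.2)) (by fun_prop)).lintegral_prod_right'
  have hWT : Measurable fun p : EuclideanSpace ℝ (Fin 2) × EuclideanSpace ℝ (Fin 2) =>
      ∫⁻ τ in Set.Ioo (0 : ℝ) 1, W p.1 * H (p.1 + τ • (p.2 - p.1)) :=
    hmeas.lintegral_prod_right'
  calc volume D * ∫⁻ x in D, ‖v x‖ₑ * W x
      = ∫⁻ x in D, ∫⁻ _ in D, ‖v x‖ₑ * W x := by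
        simp only [setLIntegral_const]
        have hvW : Measurable fun x => ‖v x‖ₑ * W x := hvm.mul hWm
        rw [lintegral_mul_const _ hvW, mul_comm]
    _ ≤ ∫⁻ x in D, ∫⁻ z in D, (W x * ‖v z‖ₑ +
          ENNReal.ofReal d * ∫⁻ τ in Set.Ioo (0 : ℝ) 1, W x * H (x + τ • (z - x))) := by
        refine setLIntegral_mono' hD fun x hx => setLIntegral_mono' hD fun z hz => ?_
        rw [lintegral_const_mul _ (hHseg x z)]
        calc ‖v x‖ₑ * W x ≤ (‖v z‖ₑ + ENNReal.ofReal d *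
              ∫⁻ τ in Set.Ioo (0 : ℝ) 1, H (x + τ • (z - x))) * W x := by
              gcongr; exact enorm_le_enorm_add_lintegral_fderiv hv (hd x hx z hz)
          _ = _ := by ring
    _ = (∫⁻ x in D, ‖v x‖ₑ) * (∫⁻ x in D, W x) + ENNReal.ofReal d *
          ∫⁻ x in D, ∫⁻ z in D, ∫⁻ τ in Set.Ioo (0 : ℝ) 1, W x * H (x + τ • (z - x)) := by
        have h1 : ∀ x, ∫⁻ z in D, (W x * ‖v z‖ₑ +
            ENNReal.ofReal d * ∫⁻ τ in Set.Ioo (0 : ℝ) 1, W x * H (x + τ • (z - x))) =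
            W x * (∫⁻ z in D, ‖v z‖ₑ) + ENNReal.ofReal d *
              ∫⁻ z in D, ∫⁻ τ in Set.Ioo (0 : ℝ) 1, W x * H (x + τ • (z - x)) := fun x => by
          have hx : Measurable fun z =>
              ∫⁻ τ in Set.Ioo (0 : ℝ) 1, W x * H (x + τ • (z - x)) :=
            hWT.comp measurable_prodMk_left
          rw [lintegral_add_left (hvm.const_mul _), lintegral_const_mul _ hvm,
            lintegral_const_mul _ hx]
        simp only [h1]
        rw [lintegral_add_left (hWm.mul_const _), lintegral_mul_const _ hWm,
          lintegral_const_mul _ hWT.lintegral_prod_right', mul_comm (∫⁻ x in D, W x)]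
    _ ≤ _ := by
        gcongr
        rw [hswap]
        refine (setLIntegral_mono' measurableSet_Ioo fun τ hτ =>
          lintegral_lintegral_segment_le hD hc hH hk hτ.1 hτ.2 (hW τ hτ.1 hτ.2)).trans ?_
        rw [lintegral_mul_const _ (by fun_prop), lintegral_rpow_neg_half]

/-- A bounded smooth increasing function whose derivative decays no faster than
`(1 + |t|) ^ (-5 / 4)`. -/
lemma exists_bounded_smooth_slowly_increasing :
    ∃ ψ ψ' : ℝ → ℝ, ContDiff ℝ (⊤ : ℕ∞) ψ ∧ (∀ t, HasDerivAt ψ (ψ' t) t) ∧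
      (∀ t, |ψ t| ≤ 2) ∧ (∀ t, |t| - 1 ≤ t * ψ t) ∧ (∀ t, 0 < ψ' t) ∧ (∀ t, ψ' t ≤ 3) ∧
      ∀ t, 1 ≤ 4 * ψ' t * ((1 + |t|) * (1 + |t|) ^ (1 / 4 : ℝ)) := by
  have hq : ∀ t : ℝ, 0 < 1 + t ^ 2 := fun t => by positivity
  have hq1 : ∀ t : ℝ, 1 ≤ 1 + t ^ 2 := fun t => by nlinarith [sq_nonneg t]
  have hle : ∀ (t : ℝ) {a : ℝ}, a ≤ 0 → (1 + t ^ 2) ^ a ≤ 1 := fun t a ha =>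
    Real.rpow_le_one_of_one_le_of_nonpos (hq1 t) ha
  have hhalf : ∀ t : ℝ, (1 + t ^ 2) ^ (-1 / 2 : ℝ) * (1 + t ^ 2) ^ (-1 / 2 : ℝ) * (1 + t ^ 2) = 1 := by
    intro t
    rw [← Real.rpow_add (hq t), ← Real.rpow_add_one (hq t).ne']
    norm_num
  have habs : ∀ t : ℝ, |t| * (1 + t ^ 2) ^ (-1 / 2 : ℝ) ≤ 1 := by
    intro t
    have hp : 0 < (1 + t ^ 2) ^ (-1 / 2 : ℝ) := Real.rpow_pos_of_pos (hq t) _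
    refine abs_le_of_sq_le_sq' ?_ zero_le_one |>.2
    nlinarith [hhalf t, sq_abs t, mul_pos hp hp]
  refine ⟨fun t => t * (1 + t ^ 2) ^ (-1 / 2 : ℝ) * (2 - (1 + t ^ 2) ^ (-1 / 8 : ℝ)),
    fun t => (1 + t ^ 2) ^ (-3 / 2 : ℝ) * (2 - (1 + t ^ 2) ^ (-1 / 8 : ℝ)) +
      1 / 4 * t ^ 2 * (1 + t ^ 2) ^ (-13 / 8 : ℝ), ?_, ?_, ?_, ?_, ?_, ?_, ?_⟩
  · have h : ∀ a : ℝ, ContDiff ℝ (⊤ : ℕ∞) (fun t : ℝ => (1 + t ^ 2) ^ a) := fun a =>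
      ContDiff.rpow_const_of_ne (by fun_prop) (fun t => (hq t).ne')
    exact (contDiff_id.mul (h _)).mul (contDiff_const.sub (h _))
  · intro t
    have h : ∀ a : ℝ, HasDerivAt (fun t : ℝ => (1 + t ^ 2) ^ a)
        (2 * t * a * (1 + t ^ 2) ^ (a - 1)) t := fun a => by
      have h0 : HasDerivAt (fun t : ℝ => 1 + t ^ 2) (2 * t) t := by
        simpa using ((hasDerivAt_id t).pow 2).const_add 1
      exact h0.rpow_const (Or.inl (hq t).ne')
    refine (((hasDerivAt_id t).mul (h (-1 / 2))).mul ((h (-1 / 8)).const_sub 2)).congr_deriv ?_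
    have e1 : (1 + t ^ 2) ^ (-1 / 2 : ℝ) = (1 + t ^ 2) ^ (-3 / 2 : ℝ) * (1 + t ^ 2) := by
      rw [← Real.rpow_add_one (hq t).ne']; norm_num
    have e2 : (1 + t ^ 2) ^ (-13 / 8 : ℝ) =
        (1 + t ^ 2) ^ (-1 / 2 : ℝ) * (1 + t ^ 2) ^ (-1 / 8 - 1 : ℝ) := by
      rw [← Real.rpow_add (hq t)]; norm_num
    have e3 : (-1 / 2 - 1 : ℝ) = -3 / 2 := by norm_num
    simp only [Pi.mul_apply, id, e2, e3]
    rw [e1]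
    ring
  · intro t
    have h2 : |2 - (1 + t ^ 2) ^ (-1 / 8 : ℝ)| ≤ 2 := by
      have := Real.rpow_pos_of_pos (hq t) (-1 / 8)
      have := hle t (a := -1 / 8) (by norm_num)
      rw [abs_le]; constructor <;> linarith
    have hp : 0 < (1 + t ^ 2) ^ (-1 / 2 : ℝ) := Real.rpow_pos_of_pos (hq t) _
    rw [abs_mul, abs_mul, abs_of_pos hp]
    nlinarith [habs t, abs_nonneg (2 - (1 + t ^ 2) ^ (-1 / 8 : ℝ))]
  · intro t
    have h1 := hle t (a := -1 / 8) (by norm_num)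
    have hp : 0 < (1 + t ^ 2) ^ (-1 / 2 : ℝ) := Real.rpow_pos_of_pos (hq t) _
    have hpt : 0 ≤ t ^ 2 * (1 + t ^ 2) ^ (-1 / 2 : ℝ) := by positivity
    have h3 : |t| - 1 ≤ t ^ 2 * (1 + t ^ 2) ^ (-1 / 2 : ℝ) := by
      have hm : (1 + t ^ 2) * (1 + t ^ 2) ^ (-1 / 2 : ℝ) ≥ |t| := by
        refine abs_le_of_sq_le_sq ?_ (by positivity)
        nlinarith [hhalf t, hq t]
      nlinarith [hle t (a := -1 / 2) (by norm_num)]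
    nlinarith
  · intro t
    have h1 := hle t (a := -1 / 8) (by norm_num)
    have : 0 < 2 - (1 + t ^ 2) ^ (-1 / 8 : ℝ) := by linarith
    positivity
  · intro t
    have h1 := hle t (a := -3 / 2) (by norm_num)
    have h0 : 0 < (1 + t ^ 2) ^ (-3 / 2 : ℝ) := Real.rpow_pos_of_pos (hq t) _
    have h2 : 0 < (1 + t ^ 2) ^ (-1 / 8 : ℝ) := Real.rpow_pos_of_pos (hq t) _
    have h3 : (1 + t ^ 2) * (1 + t ^ 2) ^ (-13 / 8 : ℝ) ≤ 1 := by
      rw [mul_comm, ← Real.rpow_add_one (hq t).ne']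
      exact hle t (by norm_num)
    have h4 : 0 < (1 + t ^ 2) ^ (-13 / 8 : ℝ) := Real.rpow_pos_of_pos (hq t) _
    nlinarith [mul_pos h0 h2]
  · intro t
    have h1 := hle t (a := -1 / 8) (by norm_num)
    have h0 : 0 < (1 + t ^ 2) ^ (-3 / 2 : ℝ) := Real.rpow_pos_of_pos (hq t) _
    have h4 : 0 < (1 + t ^ 2) ^ (-13 / 8 : ℝ) := Real.rpow_pos_of_pos (hq t) _
    have h5 : (1 + t ^ 2) ^ (-13 / 8 : ℝ) ≤ (1 + t ^ 2) ^ (-3 / 2 : ℝ) :=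
      Real.rpow_le_rpow_of_exponent_le (hq1 t) (by norm_num)
    have h6 : (1 + t ^ 2) ^ (-5 / 8 : ℝ) = (1 + t ^ 2) ^ (-13 / 8 : ℝ) * (1 + t ^ 2) := by
      rw [← Real.rpow_add_one (hq t).ne']; norm_num
    have h7 : (1 + t ^ 2) ^ (-5 / 8 : ℝ) * (1 + t ^ 2) ^ (5 / 8 : ℝ) = 1 := by
      rw [← Real.rpow_add (hq t)]; norm_num
    have h8 : (1 + t ^ 2) ^ (5 / 8 : ℝ) ≤ (1 + |t|) * (1 + |t|) ^ (1 / 4 : ℝ) := by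
      have hb : 0 < 1 + |t| := by positivity
      have e : (1 + |t|) * (1 + |t|) ^ (1 / 4 : ℝ) = ((1 + |t|) ^ 2) ^ (5 / 8 : ℝ) := by
        rw [mul_comm, ← Real.rpow_add_one hb.ne', ← Real.rpow_natCast, ← Real.rpow_mul hb.le]
        norm_num
      rw [e]
      refine Real.rpow_le_rpow (hq t).le ?_ (by norm_num)
      nlinarith [sq_abs t, abs_nonneg t]
    have h9 : 0 < (1 + t ^ 2) ^ (-5 / 8 : ℝ) := Real.rpow_pos_of_pos (hq t) _
    refine h7.symm.le.trans ?_
    refine mul_le_mul ?_ h8 (by positivity) ?_ <;> nlinarith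

lemma integrableOn_of_continuous_of_isBounded {F : Type*} [NormedAddCommGroup F]
    {D : Set (EuclideanSpace ℝ (Fin 2))} (hb : Bornology.IsBounded D)
    {g : EuclideanSpace ℝ (Fin 2) → F} (hg : Continuous g) : IntegrableOn g D :=
  (hg.continuousOn.integrableOn_compact hb.isCompact_closure).mono_set subset_closure

lemma lintegral_ofReal_of_continuous {D : Set (EuclideanSpace ℝ (Fin 2))}
    (hb : Bornology.IsBounded D) {g : EuclideanSpace ℝ (Fin 2) → ℝ} (hg : Continuous g)
    (h0 : ∀ x, 0 ≤ g x) :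
    ∫⁻ x in D, ENNReal.ofReal (g x) = ENNReal.ofReal (∫ x in D, g x) :=
  (ofReal_integral_eq_lintegral_ofReal (integrableOn_of_continuous_of_isBounded hb hg)
    (Filter.Eventually.of_forall h0)).symm

lemma norm_gradient (v : EuclideanSpace ℝ (Fin 2) → ℝ) (x : EuclideanSpace ℝ (Fin 2)) :
    ‖gradient v x‖ = ‖fderiv ℝ v x‖ := by
  simp [gradient]

lemma gradient_apply (v : EuclideanSpace ℝ (Fin 2) → ℝ) (x : EuclideanSpace ℝ (Fin 2))
    (i : Fin 2) : gradient v x i = fderiv ℝ v x (EuclideanSpace.single i (1 : ℝ)) := by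
  have h : inner ℝ (gradient v x) (EuclideanSpace.single i (1 : ℝ)) =
      fderiv ℝ v x (EuclideanSpace.single i (1 : ℝ)) := by
    simp [gradient]
  rw [← h, EuclideanSpace.inner_single_right]
  simp

lemma continuous_gradient {v : EuclideanSpace ℝ (Fin 2) → ℝ} (hv : ContDiff ℝ (⊤ : ℕ∞) v) :
    Continuous (gradient v) :=
  (InnerProductSpace.toDual ℝ (EuclideanSpace ℝ (Fin 2))).symm.continuous.comp
    (hv.continuous_fderiv (by simp))

lemma rpow_quarter_le {k τ : ℝ} (hk : 0 < k) (hτ : 0 < τ) :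
    k ^ (1 / 4 : ℝ) ≤ τ ^ (3 / 2 : ℝ) * k + τ ^ (-1 / 2 : ℝ) := by
  have h1 : 0 < τ ^ (3 / 2 : ℝ) := Real.rpow_pos_of_pos hτ _
  have h2 : 0 < τ ^ (-1 / 2 : ℝ) := Real.rpow_pos_of_pos hτ _
  have h3 : 0 < k ^ (1 / 4 : ℝ) := Real.rpow_pos_of_pos hk _
  set a := k ^ (1 / 4 : ℝ) with ha
  set b := τ ^ (1 / 2 : ℝ) with hb
  have hb0 : 0 < b := Real.rpow_pos_of_pos hτ _
  have ek : k = a ^ 4 := by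
    rw [ha, ← Real.rpow_natCast, ← Real.rpow_mul hk.le]; norm_num
  have e1 : τ ^ (3 / 2 : ℝ) = b ^ 3 := by
    rw [hb, ← Real.rpow_natCast, ← Real.rpow_mul hτ.le]; norm_num
  have e2 : τ ^ (-1 / 2 : ℝ) = b⁻¹ := by
    rw [hb, ← Real.rpow_neg hτ.le]; norm_num
  rw [e1, e2, ek]
  rcases le_total a b⁻¹ with h | h
  · have : 0 ≤ b ^ 3 * a ^ 4 := by positivity
    linarith
  · have hab : 1 ≤ b * a := by
      rwa [inv_le_iff_one_le_mul₀ hb0, mul_comm] at h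
    have : a ≤ b ^ 3 * a ^ 4 := by
      have := one_le_pow₀ hab (n := 3)
      calc a ≤ (b * a) ^ 3 * a := le_mul_of_one_le_left h3.le this
        _ = _ := by ring
    have : 0 < b⁻¹ := by positivity
    linarith

lemma integral_abs_mul_weight_le {D : Set (EuclideanSpace ℝ (Fin 2))}
    (hD : MeasurableSet D) (hc : Convex ℝ D) (hb : Bornology.IsBounded D) {d : ℝ} (hd0 : 0 ≤ d)
    (hd : ∀ x ∈ D, ∀ z ∈ D, ‖z - x‖ ≤ d)
    {v : EuclideanSpace ℝ (Fin 2) → ℝ} (hv : ContDiff ℝ (⊤ : ℕ∞) v) :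
    volume.real D * ∫ x in D, |v x| * (1 + |v x|) ^ (1 / 4 : ℝ) ≤
      (∫ x in D, |v x|) * (∫ x in D, (1 + |v x|) ^ (1 / 4 : ℝ)) +
        d * (2 * ((∫ x in D, ‖gradient v x‖) *
          ((∫ x in D, (1 + |v x|)) + 4 * volume.real D))) := by
  have hvc := hv.continuous
  have hpos : ∀ x, 0 < 1 + |v x| := fun x => by positivity
  have hwc : Continuous fun x => (1 + |v x|) ^ (1 / 4 : ℝ) :=
    Continuous.rpow_const (by fun_prop) fun x => Or.inl (hpos x).ne'
  have hkc : Continuous fun x => 1 + |v x| := by fun_prop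
  have hGc : Continuous fun x => ‖gradient v x‖ := (continuous_gradient hv).norm
  have hw0 : ∀ x, 0 ≤ (1 + |v x|) ^ (1 / 4 : ℝ) := fun x => (Real.rpow_pos_of_pos (hpos x) _).le
  have key := volume_mul_lintegral_enorm_mul_weight_le hD hc hd (v := v) (hv.of_le (by simp))
    (W := fun x => ENNReal.ofReal ((1 + |v x|) ^ (1 / 4 : ℝ)))
    (k := fun x => ENNReal.ofReal (1 + |v x|)) hwc.measurable.ennreal_ofReal
    hkc.measurable.ennreal_ofReal (fun τ h0 _ x => by
      rw [← ENNReal.ofReal_mul (by positivity), ← ENNReal.ofReal_add (by positivity) (by positivity)]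
      exact ENNReal.ofReal_le_ofReal (rpow_quarter_le (hpos x) h0))
  have evol : volume D = ENNReal.ofReal (volume.real D) :=
    (ofReal_measureReal hb.measure_lt_top.ne).symm
  have e4 : (4 : ℝ≥0∞) = ENNReal.ofReal 4 := by simp
  have e2 : (2 : ℝ≥0∞) = ENNReal.ofReal 2 := by simp
  have hm0 : 0 ≤ volume.real D := measureReal_nonneg
  have hi1 : 0 ≤ ∫ x in D, |v x| := integral_nonneg fun x => abs_nonneg _
  have hi2 : 0 ≤ ∫ x in D, (1 + |v x|) ^ (1 / 4 : ℝ) := integral_nonneg hw0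
  have hi3 : 0 ≤ ∫ x in D, ‖gradient v x‖ := integral_nonneg fun x => norm_nonneg _
  have hi4 : 0 ≤ ∫ x in D, (1 + |v x|) := integral_nonneg fun x => (hpos x).le
  simp only [← ofReal_norm, Real.norm_eq_abs, ← norm_gradient,
    ← ENNReal.ofReal_mul (abs_nonneg _)] at key
  rw [lintegral_ofReal_of_continuous hb (by fun_prop) (fun x => mul_nonneg (abs_nonneg _) (hw0 x)),
    lintegral_ofReal_of_continuous hb (by fun_prop) (fun x => abs_nonneg _),
    lintegral_ofReal_of_continuous hb hwc hw0,
    lintegral_ofReal_of_continuous hb hkc (fun x => (hpos x).le),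
    lintegral_ofReal_of_continuous hb hGc (fun x => norm_nonneg _), evol] at key
  generalize (∫ x in D, |v x| * (1 + |v x|) ^ (1 / 4 : ℝ)) = S at key ⊢
  generalize (∫ x in D, |v x|) = N at key hi1 ⊢
  generalize (∫ x in D, (1 + |v x|) ^ (1 / 4 : ℝ)) = L at key hi2 ⊢
  generalize (∫ x in D, ‖gradient v x‖) = G at key hi3 ⊢
  generalize (∫ x in D, (1 + |v x|)) = P at key hi4 ⊢
  generalize volume.real D = m at key hm0 ⊢
  rw [e2, e4, ← ENNReal.ofReal_mul hm0, ← ENNReal.ofReal_mul hi1, ← ENNReal.ofReal_mul (by norm_num),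
    ← ENNReal.ofReal_add hi4 (by positivity), ← ENNReal.ofReal_mul hi3,
    ← ENNReal.ofReal_mul (by norm_num), ← ENNReal.ofReal_mul hd0,
    ← ENNReal.ofReal_add (by positivity) (by positivity)] at key
  exact (ENNReal.ofReal_le_ofReal_iff (by positivity)).1 key

lemma gradient_comp_real {ψ : ℝ → ℝ} {ψ' : ℝ} {v : EuclideanSpace ℝ (Fin 2) → ℝ}
    {x : EuclideanSpace ℝ (Fin 2)} (hψ : HasDerivAt ψ ψ' (v x)) (hv : DifferentiableAt ℝ v x) :
    gradient (fun y => ψ (v y)) x = ψ' • gradient v x := by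
  have h : fderiv ℝ (fun y => ψ (v y)) x = ψ' • fderiv ℝ v x :=
    (hψ.comp_hasFDerivAt x hv.hasFDerivAt).fderiv
  rw [gradient, h, map_smul, gradient]

/-- The bilinear form of `-Δ + 1` controls the `W^{1,1}` norm of smooth functions. -/
lemma exists_bound_of_form_bound {m d : ℝ} (hm : 0 < m) (hd0 : 0 ≤ d) :
    ∃ C > 0, ∀ D : Set (EuclideanSpace ℝ (Fin 2)), MeasurableSet D → Convex ℝ D →
      Bornology.IsBounded D → (∀ x ∈ D, ∀ z ∈ D, ‖z - x‖ ≤ d) → volume.real D = m →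
      ∀ v : EuclideanSpace ℝ (Fin 2) → ℝ, ContDiff ℝ (⊤ : ℕ∞) v →
      (∀ φ : EuclideanSpace ℝ (Fin 2) → ℝ, ContDiff ℝ (⊤ : ℕ∞) φ → ∀ B : ℝ,
        (∀ x ∈ D, |φ x| ≤ B) →
        |∫ x in D, (inner ℝ (gradient v x) (gradient φ x) + v x * φ x)| ≤
          B + √(∫ x in D, ‖gradient φ x‖ ^ 2)) →
      ∫ x in D, |v x| ≤ C ∧ ∫ x in D, ‖gradient v x‖ ≤ C := by
  obtain ⟨ψ, ψ', hψ, hψd, hψ2, hψt, hψ0, hψ3, hψw⟩ := exists_bounded_smooth_slowly_increasing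
  set K : ℝ := 7 + 2 * m with hK
  set a : ℝ := K * (m + K) / m with ha
  set b : ℝ := 2 * d * (5 * m + K) / m with hbdef
  have hK0 : 0 < K := by positivity
  have ha0 : 0 < a := by positivity
  have hb0 : 0 ≤ b := by positivity
  refine ⟨4 * (b + 1) * K + m + K + a, by positivity, ?_⟩
  intro D hD hc hb hd hvol v hv hform
  have int : ∀ {g : EuclideanSpace ℝ (Fin 2) → ℝ}, Continuous g → IntegrableOn g D := fun hg =>
    integrableOn_of_continuous_of_isBounded hb hg
  have hvc := hv.continuous
  have hgc := continuous_gradient hv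
  have hψc := hψ.continuous
  have hψ'c : Continuous ψ' := by
    have : ψ' = deriv ψ := funext fun t => (hψd t).deriv.symm
    rw [this]
    exact hψ.continuous_deriv (by simp)
  have hpos : ∀ x, 0 < 1 + |v x| := fun x => by positivity
  have hwc : Continuous fun x => (1 + |v x|) ^ (1 / 4 : ℝ) :=
    Continuous.rpow_const (by fun_prop) fun x => Or.inl (hpos x).ne'
  have hconst : ∀ c : ℝ, ∫ _ in D, c = m * c := fun c => by
    rw [setIntegral_const, hvol, smul_eq_mul]
  have hgrad : ∀ x, gradient (fun y => ψ (v y)) x = ψ' (v x) • gradient v x := fun x =>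
    gradient_comp_real (hψd _) (hv.differentiable (by simp) x)
  set I := ∫ x in D, ψ' (v x) * ‖gradient v x‖ ^ 2 with hI
  set N := ∫ x in D, |v x| with hN
  set G := ∫ x in D, ‖gradient v x‖ with hG
  have hI0 : 0 ≤ I := integral_nonneg fun x => mul_nonneg (hψ0 _).le (by positivity)
  have hN0 : 0 ≤ N := integral_nonneg fun x => abs_nonneg _
  have hG0 : 0 ≤ G := integral_nonneg fun x => norm_nonneg _
  -- the energy estimate obtained by testing with `ψ ∘ v`
  have henergy : I + (N - m) ≤ 2 + √(3 * I) := by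
    have h1 := hform (fun y => ψ (v y)) (hψ.comp hv) 2 fun x _ => hψ2 _
    have h2 : I + (N - m) ≤
        ∫ x in D, (inner ℝ (gradient v x) (gradient (fun y => ψ (v y)) x) + v x * ψ (v x)) := by
      have e : N - m = ∫ x in D, (|v x| - 1) := by
        rw [integral_sub (int (by fun_prop)) (int (by fun_prop)), hconst, mul_one]
      rw [e, ← integral_add (int (by fun_prop)) (int (by fun_prop))]
      simp only [hgrad]
      refine setIntegral_mono (int (by fun_prop)) (int (by fun_prop)) fun x => ?_
      simp only [inner_smul_right, real_inner_self_eq_norm_sq]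
      linarith [hψt (v x)]
    have h3 : ∫ x in D, ‖gradient (fun y => ψ (v y)) x‖ ^ 2 ≤ 3 * I := by
      rw [hI, ← integral_const_mul]
      simp only [hgrad]
      refine setIntegral_mono (int (by fun_prop)) (int (by fun_prop)) fun x => ?_
      simp only [norm_smul, Real.norm_eq_abs, abs_of_pos (hψ0 _), mul_pow]
      have := mul_le_mul_of_nonneg_right (hψ3 (v x))
        (mul_nonneg (hψ0 (v x)).le (sq_nonneg ‖gradient v x‖))
      nlinarith
    exact (h2.trans (le_abs_self _)).trans (h1.trans (by gcongr))
  have hsqrt : √(3 * I) ≤ I / 2 + 3 / 2 := by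
    refine Real.sqrt_le_iff.2 ⟨by positivity, ?_⟩
    nlinarith [sq_nonneg (I - 3)]
  have hIK : I ≤ K := by linarith
  have hNK : N ≤ K := by linarith
  have hsum : ∫ x in D, (1 + |v x|) = m + N := by
    rw [integral_add (int (by fun_prop)) (int (by fun_prop)), hconst, mul_one]
  have hw1 : ∫ x in D, (1 + |v x|) ^ (1 / 4 : ℝ) ≤ m + N := by
    rw [← hsum]
    refine setIntegral_mono (int hwc) (int (by fun_prop)) fun x => ?_
    exact Real.rpow_le_self_of_one_le (by linarith [abs_nonneg (v x)]) (by norm_num)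
  have hS : ∫ x in D, |v x| * (1 + |v x|) ^ (1 / 4 : ℝ) ≤ a + b * G := by
    have h := integral_abs_mul_weight_le hD hc hb hd0 hd hv
    rw [hvol, hsum] at h
    have h1 : m * ∫ x in D, |v x| * (1 + |v x|) ^ (1 / 4 : ℝ) ≤
        K * (m + K) + d * (2 * (G * (m + K + 4 * m))) := by
      refine h.trans ?_
      gcongr
      exact hw1.trans (by linarith)
    have e : a + b * G = (K * (m + K) + d * (2 * (G * (m + K + 4 * m)))) / m := by
      rw [ha, hbdef]; field_simp; ring
    rw [e, le_div_iff₀ hm, mul_comm]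
    exact h1
  have hl : 0 < 4 * (b + 1) := by positivity
  have hGbound : 2 * G ≤ 4 * (b + 1) * I + 1 / (b + 1) *
      ((∫ x in D, (1 + |v x|) ^ (1 / 4 : ℝ)) +
        ∫ x in D, |v x| * (1 + |v x|) ^ (1 / 4 : ℝ)) := by
    rw [← integral_add (int hwc) (int (by fun_prop)), hG, hI, ← integral_const_mul,
      ← integral_const_mul, ← integral_const_mul,
      ← integral_add (int (by fun_prop)) (int (by fun_prop))]
    refine setIntegral_mono (int (by fun_prop)) (int (by fun_prop)) fun x => ?_
    have h1 := hψw (v x)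
    have hp := hψ0 (v x)
    set p := ψ' (v x)
    set h := ‖gradient v x‖
    set w := (1 + |v x|) ^ (1 / 4 : ℝ)
    set l := 4 * (b + 1)
    have h2 : 1 / (b + 1) * (w + |v x| * w) = 4 * ((1 + |v x|) * w) / l := by
      simp only [l]; field_simp
    have h3 : 1 / (l * p) ≤ 4 * ((1 + |v x|) * w) / l := by
      rw [div_le_div_iff₀ (by positivity) hl]
      nlinarith
    have h4 : 2 * h ≤ l * (p * h ^ 2) + 1 / (l * p) := by
      have e : l * (p * h ^ 2) + 1 / (l * p) - 2 * h = (l * p * h - 1) ^ 2 / (l * p) := by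
        field_simp; ring
      have : 0 ≤ (l * p * h - 1) ^ 2 / (l * p) := by positivity
      linarith
    simp only
    rw [h2]
    linarith
  have hdiv : 1 / (b + 1) * ((∫ x in D, (1 + |v x|) ^ (1 / 4 : ℝ)) +
      ∫ x in D, |v x| * (1 + |v x|) ^ (1 / 4 : ℝ)) ≤ m + K + a + G := by
    rw [one_div_mul_eq_div, div_le_iff₀ (by positivity)]
    nlinarith [mul_nonneg hb0 (by positivity : 0 ≤ m + K + a)]
  have hlI : 4 * (b + 1) * I ≤ 4 * (b + 1) * K := by gcongr
  constructor
  · have : 0 < 4 * (b + 1) * K := by positivity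
    linarith
  · linarith

lemma exists_bound_of_form_bound_mul {m d : ℝ} (hm : 0 < m) (hd0 : 0 ≤ d) :
    ∃ C > 0, ∀ D : Set (EuclideanSpace ℝ (Fin 2)), MeasurableSet D → Convex ℝ D →
      Bornology.IsBounded D → (∀ x ∈ D, ∀ z ∈ D, ‖z - x‖ ≤ d) → volume.real D = m →
      ∀ v : EuclideanSpace ℝ (Fin 2) → ℝ, ContDiff ℝ (⊤ : ℕ∞) v → ∀ M > 0,
      (∀ φ : EuclideanSpace ℝ (Fin 2) → ℝ, ContDiff ℝ (⊤ : ℕ∞) φ → ∀ B : ℝ,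
        (∀ x ∈ D, |φ x| ≤ B) →
        |∫ x in D, (inner ℝ (gradient v x) (gradient φ x) + v x * φ x)| ≤
          M * (B + √(∫ x in D, ‖gradient φ x‖ ^ 2))) →
      ∫ x in D, |v x| ≤ C * M ∧ ∫ x in D, ‖gradient v x‖ ≤ C * M := by
  obtain ⟨C, hC, h⟩ := exists_bound_of_form_bound hm hd0
  refine ⟨C, hC, fun D hD hc hb hd hvol v hv M hM hform => ?_⟩
  have hgrad : ∀ x, gradient (fun y => M⁻¹ * v y) x = M⁻¹ • gradient v x := fun x =>
    gradient_comp_real (by simpa using (hasDerivAt_id (v x)).const_mul M⁻¹)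
      (hv.differentiable (by simp) x)
  have := h D hD hc hb hd hvol (fun y => M⁻¹ * v y) (contDiff_const.mul hv) fun φ hφ B hB => by
    have e : ∫ x in D, (inner ℝ (gradient (fun y => M⁻¹ * v y) x) (gradient φ x) +
        M⁻¹ * v x * φ x) =
        M⁻¹ * ∫ x in D, (inner ℝ (gradient v x) (gradient φ x) + v x * φ x) := by
      rw [← integral_const_mul]
      congr 1 with x
      rw [hgrad, real_inner_smul_left]
      ring
    rw [e, abs_mul, abs_of_pos (inv_pos.2 hM), inv_mul_le_iff₀ hM]
    exact hform φ hφ B hB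
  simp only [hgrad, norm_smul, abs_mul, Real.norm_eq_abs, abs_of_pos (inv_pos.2 hM),
    integral_const_mul, inv_mul_le_iff₀ hM] at this
  rwa [mul_comm C]

lemma memLp_of_continuous_of_isBounded {F : Type*} [NormedAddCommGroup F]
    {D : Set (EuclideanSpace ℝ (Fin 2))} (hD : MeasurableSet D) (hb : Bornology.IsBounded D)
    {g : EuclideanSpace ℝ (Fin 2) → F} (hg : Continuous g) (p : ℝ≥0∞) :
    MemLp g p (volume.restrict D) := by
  have : IsFiniteMeasure (volume.restrict D) := ⟨by simpa using hb.measure_lt_top⟩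
  obtain ⟨B, hB⟩ := hb.isCompact_closure.exists_bound_of_continuousOn hg.continuousOn
  exact MemLp.of_bound (integrableOn_of_continuous_of_isBounded hb hg).aestronglyMeasurable B
    ((ae_restrict_mem hD).mono fun x hx => hB x (subset_closure hx))

lemma gradient_add_smooth {v w : EuclideanSpace ℝ (Fin 2) → ℝ} (hv : ContDiff ℝ (⊤ : ℕ∞) v)
    (hw : ContDiff ℝ (⊤ : ℕ∞) w) : gradient (v + w) = gradient v + gradient w := by
  ext1 x
  simp only [gradient, Pi.add_apply]
  rw [fderiv_add (hv.differentiable (by simp) x) (hw.differentiable (by simp) x), map_add]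

lemma gradient_const_smul_smooth {v : EuclideanSpace ℝ (Fin 2) → ℝ}
    (hv : ContDiff ℝ (⊤ : ℕ∞) v) (c : ℝ) : gradient (c • v) = c • gradient v := by
  ext1 x
  simp only [gradient, Pi.smul_apply]
  rw [fderiv_const_smul (hv.differentiable (by simp) x), map_smul]

/-- The graph of the gradient on smooth functions, inside `L²(D) × L²(D; ℝ²)`. -/
def smoothGraph (D : Set (EuclideanSpace ℝ (Fin 2))) :
    Submodule ℝ (WithLp 2 (Lp ℝ 2 (volume.restrict D) ×
      Lp (EuclideanSpace ℝ (Fin 2)) 2 (volume.restrict D))) where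
  carrier := {p | ∃ v : EuclideanSpace ℝ (Fin 2) → ℝ, ContDiff ℝ (⊤ : ℕ∞) v ∧
    p.fst =ᵐ[volume.restrict D] v ∧ p.snd =ᵐ[volume.restrict D] gradient v}
  zero_mem' := by
    refine ⟨0, contDiff_const, Lp.coeFn_zero _ _ _, ?_⟩
    have : gradient (0 : EuclideanSpace ℝ (Fin 2) → ℝ) = 0 := by
      ext1 x; simp [gradient]
    rw [this]
    exact Lp.coeFn_zero _ _ _
  add_mem' := by
    rintro p q ⟨v, hv, hv1, hv2⟩ ⟨w, hw, hw1, hw2⟩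
    refine ⟨v + w, hv.add hw, (Lp.coeFn_add _ _).trans (hv1.add hw1), ?_⟩
    rw [gradient_add_smooth hv hw]
    exact (Lp.coeFn_add _ _).trans (hv2.add hw2)
  smul_mem' := by
    rintro c p ⟨v, hv, hv1, hv2⟩
    refine ⟨c • v, hv.const_smul c, (Lp.coeFn_smul _ _).trans (hv1.const_smul c), ?_⟩
    rw [gradient_const_smul_smooth hv]
    exact (Lp.coeFn_smul _ _).trans (hv2.const_smul c)

lemma inner_withLp_Lp {D : Set (EuclideanSpace ℝ (Fin 2))}
    {p q : WithLp 2 (Lp ℝ 2 (volume.restrict D) ×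
      Lp (EuclideanSpace ℝ (Fin 2)) 2 (volume.restrict D))}
    {v φ : EuclideanSpace ℝ (Fin 2) → ℝ} {V Φ : EuclideanSpace ℝ (Fin 2) → EuclideanSpace ℝ (Fin 2)}
    (hp : p.fst =ᵐ[volume.restrict D] v) (hp' : p.snd =ᵐ[volume.restrict D] V)
    (hq : q.fst =ᵐ[volume.restrict D] φ) (hq' : q.snd =ᵐ[volume.restrict D] Φ) :
    inner ℝ p q = (∫ x in D, v x * φ x) + ∫ x in D, inner ℝ (V x) (Φ x) := by
  rw [WithLp.prod_inner_apply, L2.inner_def, L2.inner_def]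
  congr 1
  · refine integral_congr_ae ?_
    filter_upwards [hp, hq] with x h1 h2
    change inner ℝ (p.fst x) (q.fst x) = _
    rw [h1, h2]
    simp [mul_comm]
  · refine integral_congr_ae ?_
    filter_upwards [hp', hq'] with x h1 h2
    change inner ℝ (p.snd x) (q.snd x) = _
    rw [h1, h2]

lemma Submodule.exists_mem_forall_abs_inner_sub_le {V : Type*} [NormedAddCommGroup V]
    [InnerProductSpace ℝ V] [CompleteSpace V] (S : Submodule ℝ V) (q : V) {η : ℝ} (hη : 0 < η) :
    ∃ s ∈ S, ∀ t ∈ S, |inner ℝ s t - inner ℝ q t| ≤ η * ‖t‖ := by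
  have hcomplete : CompleteSpace S.topologicalClosure :=
    S.isClosed_topologicalClosure.completeSpace_coe
  set p := S.topologicalClosure.starProjection q
  have hpmem : p ∈ closure (S : Set V) := S.topologicalClosure.starProjection_apply_mem q
  obtain ⟨s, hsS, hs⟩ := Metric.mem_closure_iff.1 hpmem η hη
  refine ⟨s, hsS, fun t ht => ?_⟩
  have horth : inner ℝ (q - p) t = 0 :=
    S.topologicalClosure.starProjection_inner_eq_zero q t (S.le_topologicalClosure ht)
  have e : inner ℝ s t - inner ℝ q t = inner ℝ (s - p) t - inner ℝ (q - p) t := by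
    simp only [inner_sub_left]; ring
  rw [e, horth, sub_zero]
  refine (abs_real_inner_le_norm _ _).trans ?_
  gcongr
  rw [← dist_eq_norm, dist_comm]
  exact hs.le

/-- Approximate solvability of the variational problem for square-integrable data, among smooth
functions. -/
lemma exists_smooth_almost_solution_of_memLp_two {D : Set (EuclideanSpace ℝ (Fin 2))}
    (hD : MeasurableSet D) (hb : Bornology.IsBounded D) {g : EuclideanSpace ℝ (Fin 2) → ℝ}
    (hg : MemLp g 2 (volume.restrict D)) {η : ℝ} (hη : 0 < η) :
    ∃ v : EuclideanSpace ℝ (Fin 2) → ℝ, ContDiff ℝ (⊤ : ℕ∞) v ∧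
      ∀ φ : EuclideanSpace ℝ (Fin 2) → ℝ, ContDiff ℝ (⊤ : ℕ∞) φ →
        |(∫ x in D, (inner ℝ (gradient v x) (gradient φ x) + v x * φ x)) - ∫ x in D, g x * φ x| ≤
          η * √((∫ x in D, φ x ^ 2) + ∫ x in D, ‖gradient φ x‖ ^ 2) := by
  set S := smoothGraph D
  set q : WithLp 2 (Lp ℝ 2 (volume.restrict D) ×
    Lp (EuclideanSpace ℝ (Fin 2)) 2 (volume.restrict D)) := WithLp.toLp 2 (hg.toLp g, 0) with hq
  have hq1 : q.fst =ᵐ[volume.restrict D] g := hg.coeFn_toLp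
  have hq2 : q.snd =ᵐ[volume.restrict D] 0 := Lp.coeFn_zero _ _ _
  obtain ⟨s, ⟨v, hv, hv1, hv2⟩, hs⟩ := S.exists_mem_forall_abs_inner_sub_le q hη
  refine ⟨v, hv, fun φ hφ => ?_⟩
  have hφ1 := memLp_of_continuous_of_isBounded hD hb hφ.continuous 2
  have hφ2 := memLp_of_continuous_of_isBounded hD hb (continuous_gradient hφ) 2
  set t : WithLp 2 (Lp ℝ 2 (volume.restrict D) ×
    Lp (EuclideanSpace ℝ (Fin 2)) 2 (volume.restrict D)) :=
    WithLp.toLp 2 (hφ1.toLp φ, hφ2.toLp (gradient φ))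
  have ht1 : t.fst =ᵐ[volume.restrict D] φ := hφ1.coeFn_toLp
  have ht2 : t.snd =ᵐ[volume.restrict D] gradient φ := hφ2.coeFn_toLp
  have hst := inner_withLp_Lp hv1 hv2 ht1 ht2
  have hqt := inner_withLp_Lp hq1 hq2 ht1 ht2
  have htt := inner_withLp_Lp ht1 ht2 ht1 ht2
  have hnorm : ‖t‖ = √((∫ x in D, φ x ^ 2) + ∫ x in D, ‖gradient φ x‖ ^ 2) := by
    rw [norm_eq_sqrt_real_inner, htt]
    simp only [real_inner_self_eq_norm_sq, pow_two]
  have hform : ∫ x in D, (inner ℝ (gradient v x) (gradient φ x) + v x * φ x) = inner ℝ s t := by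
    rw [hst, integral_add, add_comm]
    · exact integrableOn_of_continuous_of_isBounded hb
        ((continuous_gradient hv).inner (continuous_gradient hφ))
    · exact integrableOn_of_continuous_of_isBounded hb (hv.continuous.mul hφ.continuous)
  have hdata : ∫ x in D, g x * φ x = inner ℝ q t := by
    rw [hqt]; simp
  rw [hform, hdata, ← hnorm]
  exact hs t ⟨φ, hφ, ht1, ht2⟩

lemma exists_smooth_almost_solution {D : Set (EuclideanSpace ℝ (Fin 2))}
    (hD : MeasurableSet D) (hb : Bornology.IsBounded D) {f : EuclideanSpace ℝ (Fin 2) → ℝ}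
    (hf : Integrable f (volume.restrict D)) {δ : ℝ} (hδ : 0 < δ) :
    ∃ v : EuclideanSpace ℝ (Fin 2) → ℝ, ContDiff ℝ (⊤ : ℕ∞) v ∧
      ∀ φ : EuclideanSpace ℝ (Fin 2) → ℝ, ContDiff ℝ (⊤ : ℕ∞) φ → ∀ B : ℝ, 0 ≤ B →
        (∀ x ∈ D, |φ x| ≤ B) →
        |(∫ x in D, (inner ℝ (gradient v x) (gradient φ x) + v x * φ x)) - ∫ x in D, f x * φ x| ≤
          δ * (B + √(∫ x in D, ‖gradient φ x‖ ^ 2)) := by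
  set m := volume.real D with hm
  have hm0 : 0 ≤ m := measureReal_nonneg
  obtain ⟨g, -, hfg, hgc, hgi⟩ := ((integrable_indicator_iff hD).2
    hf).exists_hasCompactSupport_integral_sub_le (half_pos hδ)
  obtain ⟨v, hv, hform⟩ := exists_smooth_almost_solution_of_memLp_two hD hb
    (memLp_of_continuous_of_isBounded hD hb hgc 2) (η := δ / (2 * (1 + √m))) (by positivity)
  refine ⟨v, hv, fun φ hφ B hB0 hB => ?_⟩
  have hφc := hφ.continuous
  have hgφ : IntegrableOn (fun x => g x * φ x) D :=
    integrableOn_of_continuous_of_isBounded hb (hgc.mul hφc)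
  have hBae : ∀ᵐ x ∂volume.restrict D, ‖φ x‖ ≤ B := (ae_restrict_mem hD).mono hB
  have hfφ : IntegrableOn (fun x => f x * φ x) D :=
    hf.mul_bdd hφc.aestronglyMeasurable hBae
  have hfgD : ∫ x in D, ‖f x - g x‖ ≤ δ / 2 := by
    calc ∫ x in D, ‖f x - g x‖ = ∫ x in D, ‖D.indicator f x - g x‖ :=
          setIntegral_congr_fun hD fun x hx => by simp [hx]
      _ ≤ ∫ x, ‖D.indicator f x - g x‖ := setIntegral_le_integral
          (((integrable_indicator_iff hD).2 hf).sub hgi).norm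
          (Filter.Eventually.of_forall fun x => norm_nonneg _)
      _ ≤ δ / 2 := hfg
  have h1 : |(∫ x in D, g x * φ x) - ∫ x in D, f x * φ x| ≤ δ / 2 * B := by
    have hgfi : IntegrableOn (fun x => ‖f x - g x‖) D := (hf.sub hgi.restrict).norm
    rw [← integral_sub hgφ hfφ, ← Real.norm_eq_abs]
    refine (norm_integral_le_of_norm_le (hgfi.mul_const B) ?_).trans ?_
    · filter_upwards [hBae] with x hx
      rw [← sub_mul, norm_mul, norm_sub_rev]
      gcongr
    · rw [integral_mul_const]
      gcongr
  have h2 : √((∫ x in D, φ x ^ 2) + ∫ x in D, ‖gradient φ x‖ ^ 2) ≤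
      √m * B + √(∫ x in D, ‖gradient φ x‖ ^ 2) := by
    have hφ2 : ∫ x in D, φ x ^ 2 ≤ m * B ^ 2 := by
      calc ∫ x in D, φ x ^ 2 ≤ ∫ _ in D, B ^ 2 := by
            refine setIntegral_mono_on (integrableOn_of_continuous_of_isBounded hb (by fun_prop))
              (integrableOn_of_continuous_of_isBounded hb (by fun_prop)) hD fun x hx => ?_
            exact sq_le_sq' (abs_le.1 (hB x hx)).1 (abs_le.1 (hB x hx)).2
        _ = m * B ^ 2 := by rw [setIntegral_const, smul_eq_mul]
    have hG0 : 0 ≤ ∫ x in D, ‖gradient φ x‖ ^ 2 := integral_nonneg fun x => by positivity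
    refine Real.sqrt_le_iff.2 ⟨by positivity, ?_⟩
    nlinarith [Real.sq_sqrt hm0, Real.sq_sqrt hG0,
      mul_nonneg (mul_nonneg (Real.sqrt_nonneg m) hB0)
        (Real.sqrt_nonneg (∫ x in D, ‖gradient φ x‖ ^ 2))]
  have h3 := (hform φ hφ).trans (mul_le_mul_of_nonneg_left h2 (by positivity))
  set A := ∫ x in D, (inner ℝ (gradient v x) (gradient φ x) + v x * φ x)
  set Q := √(∫ x in D, ‖gradient φ x‖ ^ 2)
  have hQ : 0 ≤ Q := Real.sqrt_nonneg _
  have h4 : δ / (2 * (1 + √m)) * (√m * B + Q) ≤ δ / 2 * (B + Q) := by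
    rw [div_mul_eq_mul_div, div_le_iff₀ (by positivity)]
    have := Real.sqrt_nonneg m
    nlinarith [mul_nonneg hδ.le hB0, mul_nonneg hδ.le (mul_nonneg this hQ)]
  calc |A - ∫ x in D, f x * φ x|
      ≤ |A - ∫ x in D, g x * φ x| + |(∫ x in D, g x * φ x) - ∫ x in D, f x * φ x| :=
        abs_sub_le _ _ _
    _ ≤ δ / 2 * (B + Q) + δ / 2 * B := add_le_add (h3.trans h4) h1
    _ ≤ δ * (B + Q) := by nlinarith [mul_nonneg hδ.le hQ]

lemma exists_tendsto_integral_norm_sub {α V : Type*} [MeasurableSpace α] {μ : Measure α}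
    [NormedAddCommGroup V] [NormedSpace ℝ V] [CompleteSpace V] {F : ℕ → α → V}
    (hF : ∀ n, Integrable (F n) μ) {b : ℕ → ℝ} (hb : Filter.Tendsto b Filter.atTop (nhds 0))
    (h : ∀ n k, ∫ x, ‖F n x - F k x‖ ∂μ ≤ b n + b k) :
    ∃ G : α → V, Integrable G μ ∧
      Filter.Tendsto (fun n => ∫ x, ‖F n x - G x‖ ∂μ) Filter.atTop (nhds 0) := by
  have hcauchy : CauchySeq fun n => (hF n).toL1 (F n) := by
    rw [Metric.cauchySeq_iff']
    intro ε hε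
    obtain ⟨N, hN⟩ := Filter.eventually_atTop.1 (hb.eventually (gt_mem_nhds (half_pos hε)))
    refine ⟨N, fun n hn => ?_⟩
    rw [dist_eq_norm, ← Integrable.toL1_sub, L1.norm_of_fun_eq_integral_norm]
    have := h n N
    have h1 := hN n hn
    have h2 := hN N le_rfl
    simp only [Pi.sub_apply]
    linarith
  obtain ⟨g, hg⟩ := cauchySeq_tendsto_of_complete hcauchy
  refine ⟨g, L1.integrable_coeFn g, ?_⟩
  rw [tendsto_iff_norm_sub_tendsto_zero] at hg
  refine hg.congr fun n => ?_
  rw [L1.norm_eq_integral_norm]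
  refine integral_congr_ae ?_
  filter_upwards [Lp.coeFn_sub ((hF n).toL1 (F n)) g, (hF n).coeFn_toL1] with x h1 h2
  rw [h1, Pi.sub_apply, h2]

lemma tendsto_integral_inner_of_tendsto_integral_norm_sub {α V : Type*} [MeasurableSpace α]
    {μ : Measure α} [NormedAddCommGroup V] [InnerProductSpace ℝ V] {F : ℕ → α → V} {G Ξ : α → V}
    (hF : ∀ n, Integrable (F n) μ) (hG : Integrable G μ) (hΞ : AEStronglyMeasurable Ξ μ) {B : ℝ}
    (hB : ∀ᵐ x ∂μ, ‖Ξ x‖ ≤ B)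
    (h : Filter.Tendsto (fun n => ∫ x, ‖F n x - G x‖ ∂μ) Filter.atTop (nhds 0)) :
    Filter.Tendsto (fun n => ∫ x, inner ℝ (F n x) (Ξ x) ∂μ) Filter.atTop
      (nhds (∫ x, inner ℝ (G x) (Ξ x) ∂μ)) := by
  have hinner : ∀ {H : α → V}, Integrable H μ → Integrable (fun x => inner ℝ (H x) (Ξ x)) μ := by
    intro H hH
    refine (hH.norm.mul_const B).mono' (hH.aestronglyMeasurable.inner hΞ) ?_
    filter_upwards [hB] with x hx
    exact (norm_inner_le_norm _ _).trans (by gcongr)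
  rw [tendsto_iff_norm_sub_tendsto_zero]
  refine squeeze_zero (fun n => norm_nonneg _) (fun n => ?_) (by simpa using h.mul_const B)
  rw [← integral_sub (hinner (hF n)) (hinner hG), ← integral_mul_const]
  refine norm_integral_le_of_norm_le (((hF n).sub hG).norm.mul_const B) ?_
  filter_upwards [hB] with x hx
  rw [← inner_sub_left]
  exact (norm_inner_le_norm _ _).trans (by gcongr)

lemma integral_norm_le_of_tendsto {α V : Type*} [MeasurableSpace α] {μ : Measure α}
    [NormedAddCommGroup V] {F : ℕ → α → V} {G : α → V}
    (hF : ∀ n, Integrable (F n) μ) (hG : Integrable G μ)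
    (h : Filter.Tendsto (fun n => ∫ x, ‖F n x - G x‖ ∂μ) Filter.atTop (nhds 0)) {c : ℕ → ℝ} {L : ℝ}
    (hc : Filter.Tendsto c Filter.atTop (nhds L)) (hFc : ∀ n, ∫ x, ‖F n x‖ ∂μ ≤ c n) :
    ∫ x, ‖G x‖ ∂μ ≤ L := by
  refine ge_of_tendsto' (by simpa using hc.add h) fun n => ?_
  refine le_trans ?_ (add_le_add_left (hFc n) _)
  have hsub : Integrable (fun x => F n x - G x) μ := (hF n).sub hG
  rw [← integral_add (hF n).norm hsub.norm]
  refine integral_mono hG.norm ((hF n).norm.add hsub.norm) fun x => ?_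
  simpa [norm_sub_rev] using norm_le_norm_add_norm_sub (F n x) (G x)

lemma setIntegral_mul_fderiv_eq_neg {D : Set (EuclideanSpace ℝ (Fin 2))}
    {v φ : EuclideanSpace ℝ (Fin 2) → ℝ} (hv : ContDiff ℝ (⊤ : ℕ∞) v)
    (hφ : ContDiff ℝ (⊤ : ℕ∞) φ) (hs : HasCompactSupport φ) (hsD : tsupport φ ⊆ D)
    (e : EuclideanSpace ℝ (Fin 2)) :
    ∫ x in D, v x * fderiv ℝ φ x e = - ∫ x in D, fderiv ℝ v x e * φ x := by
  have hvd : Continuous fun x => fderiv ℝ v x e :=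
    (hv.continuous_fderiv (by simp)).clm_apply continuous_const
  have hφd : Continuous fun x => fderiv ℝ φ x e :=
    (hφ.continuous_fderiv (by simp)).clm_apply continuous_const
  have hsd : HasCompactSupport fun x => fderiv ℝ φ x e := hs.fderiv_apply ℝ e
  have h0 : ∀ x, x ∉ D → φ x = 0 := fun x hx =>
    image_eq_zero_of_notMem_tsupport fun h => hx (hsD h)
  have h0' : ∀ x, x ∉ D → fderiv ℝ φ x = 0 := fun x hx =>
    image_eq_zero_of_notMem_tsupport fun h => hx (hsD (tsupport_fderiv_subset ℝ h))
  rw [setIntegral_eq_integral_of_forall_compl_eq_zero fun x hx => by simp [h0' x hx],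
    setIntegral_eq_integral_of_forall_compl_eq_zero fun x hx => by simp [h0 x hx]]
  exact integral_mul_fderiv_eq_neg_fderiv_mul_of_integrable
    ((hvd.mul hφ.continuous).integrable_of_hasCompactSupport hs.mul_left)
    ((hv.continuous.mul hφd).integrable_of_hasCompactSupport hsd.mul_left)
    ((hv.continuous.mul hφ.continuous).integrable_of_hasCompactSupport hs.mul_left)
    (fun x _ => hv.differentiable (by simp) x) (fun x _ => hφ.differentiable (by simp) x)

lemma inner_eq_sum_mul_fderiv (U : EuclideanSpace ℝ (Fin 2)) (φ : EuclideanSpace ℝ (Fin 2) → ℝ)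
    (x : EuclideanSpace ℝ (Fin 2)) :
    inner ℝ U (gradient φ x) =
      ∑ i : Fin 2, U i * fderiv ℝ φ x (EuclideanSpace.single i (1 : ℝ)) := by
  simp only [PiLp.inner_apply, gradient_apply, RCLike.inner_apply, conj_trivial, mul_comm]

lemma form_sub {D : Set (EuclideanSpace ℝ (Fin 2))} (hb : Bornology.IsBounded D)
    {v w φ : EuclideanSpace ℝ (Fin 2) → ℝ} (hv : ContDiff ℝ (⊤ : ℕ∞) v)
    (hw : ContDiff ℝ (⊤ : ℕ∞) w) (hφ : ContDiff ℝ (⊤ : ℕ∞) φ) :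
    ∫ x in D, (inner ℝ (gradient v x - gradient w x) (gradient φ x) + (v x - w x) * φ x) =
      (∫ x in D, (inner ℝ (gradient v x) (gradient φ x) + v x * φ x)) -
        ∫ x in D, (inner ℝ (gradient w x) (gradient φ x) + w x * φ x) := by
  have hvg := continuous_gradient hv
  have hwg := continuous_gradient hw
  have hφg := continuous_gradient hφ
  have hvc := hv.continuous
  have hwc := hw.continuous
  have hφc := hφ.continuous
  rw [← integral_sub (integrableOn_of_continuous_of_isBounded hb (by fun_prop))
    (integrableOn_of_continuous_of_isBounded hb (by fun_prop))]
  congr 1 with x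
  rw [inner_sub_left]
  ring

lemma gradient_sub_smooth {v w : EuclideanSpace ℝ (Fin 2) → ℝ} (hv : ContDiff ℝ (⊤ : ℕ∞) v)
    (hw : ContDiff ℝ (⊤ : ℕ∞) w) (x : EuclideanSpace ℝ (Fin 2)) :
    gradient (fun y => v y - w y) x = gradient v x - gradient w x := by
  simp only [gradient]
  rw [fderiv_fun_sub (hv.differentiable (by simp) x) (hw.differentiable (by simp) x), map_sub]

/-- `L¹` theory for the Neumann problem on the disk `D = B_R(x₀) ⊂ ℝ²`: for every
`f ∈ L¹(D)`, the problem `−Δu + u = f`, `∂u/∂n = 0` admits a weak solution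
`u ∈ W^{1,1}(D)` (tested against all `φ ∈ C^∞(closure D)`) satisfying
`‖u‖_{W^{1,1}(D)} ≤ C ‖f‖_{L¹(D)}` with `C = C(R)`. -/
theorem stmt4 (R : ℝ) (hR : 0 < R) :
    ∃ C > 0, ∀ (x₀ : EuclideanSpace ℝ (Fin 2)) (f : EuclideanSpace ℝ (Fin 2) → ℝ),
      Integrable f (volume.restrict (ball x₀ R)) →
      ∃ (u : EuclideanSpace ℝ (Fin 2) → ℝ) (Du : EuclideanSpace ℝ (Fin 2) → Fin 2 → ℝ),
        IsWeakGrad (ball x₀ R) u Du ∧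
        Integrable u (volume.restrict (ball x₀ R)) ∧
        Integrable Du (volume.restrict (ball x₀ R)) ∧
        (∀ φ : EuclideanSpace ℝ (Fin 2) → ℝ, ContDiff ℝ (⊤ : ℕ∞) φ →
          ∫ x in ball x₀ R,
              ((∑ i : Fin 2, Du x i * fderiv ℝ φ x (EuclideanSpace.single i (1 : ℝ))) +
                u x * φ x)
            = ∫ x in ball x₀ R, f x * φ x) ∧
        (eLpNorm u 1 (volume.restrict (ball x₀ R))).toReal +
            (eLpNorm Du 1 (volume.restrict (ball x₀ R))).toReal ≤
          C * (eLpNorm f 1 (volume.restrict (ball x₀ R))).toReal := by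
  have hm : 0 < volume.real (ball (0 : EuclideanSpace ℝ (Fin 2)) R) :=
    ENNReal.toReal_pos (measure_ball_pos _ _ hR).ne' measure_ball_lt_top.ne
  obtain ⟨C, hC, hbound⟩ := exists_bound_of_form_bound_mul hm (d := 2 * R) (by positivity)
  refine ⟨2 * C, by positivity, fun x₀ f hf => ?_⟩
  set D := ball x₀ R with hDdef
  have hD : MeasurableSet D := measurableSet_ball
  have hb : Bornology.IsBounded D := isBounded_ball
  have hx₀ : x₀ ∈ D := mem_ball_self hR
  have hd : ∀ x ∈ D, ∀ z ∈ D, ‖z - x‖ ≤ 2 * R := by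
    intro x hx z hz
    rw [← dist_eq_norm]
    have := dist_triangle_right z x x₀
    linarith [mem_ball.1 hx, mem_ball.1 hz]
  have hvol : volume.real D = volume.real (ball (0 : EuclideanSpace ℝ (Fin 2)) R) := by
    rw [measureReal_def, measureReal_def, hDdef, Measure.addHaar_ball_center]
  have hapriori := hbound D hD (convex_ball _ _) hb hd hvol
  have hδ : ∀ n : ℕ, (0 : ℝ) < 1 / (n + 1) := fun n => by positivity
  have hδlim : Filter.Tendsto (fun n : ℕ => (1 : ℝ) / (n + 1)) Filter.atTop (nhds 0) :=
    tendsto_one_div_add_atTop_nhds_zero_nat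
  choose v hv hform using fun n : ℕ => exists_smooth_almost_solution hD hb hf (hδ n)
  have hvi : ∀ n, Integrable (v n) (volume.restrict D) := fun n =>
    integrableOn_of_continuous_of_isBounded hb (hv n).continuous
  have hgi : ∀ n, Integrable (gradient (v n)) (volume.restrict D) := fun n =>
    integrableOn_of_continuous_of_isBounded hb (continuous_gradient (hv n))
  have hcauchy : ∀ n k, ∫ x in D, |v n x - v k x| ≤ C * (1 / (n + 1)) + C * (1 / (k + 1)) ∧
      ∫ x in D, ‖gradient (v n) x - gradient (v k) x‖ ≤
        C * (1 / (n + 1)) + C * (1 / (k + 1)) := by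
    intro n k
    have h := hapriori (fun x => v n x - v k x) ((hv n).sub (hv k)) (1 / (n + 1) + 1 / (k + 1))
      (by positivity) fun φ hφ B hB => by
        have hB0 : 0 ≤ B := (abs_nonneg _).trans (hB x₀ hx₀)
        simp only [gradient_sub_smooth (hv n) (hv k)]
        rw [form_sub hb (hv n) (hv k) hφ, add_mul]
        refine (abs_sub_le _ (∫ x in D, f x * φ x) _).trans (add_le_add (hform n φ hφ B hB0 hB) ?_)
        rw [abs_sub_comm]
        exact hform k φ hφ B hB0 hB
    simpa only [gradient_sub_smooth (hv n) (hv k), mul_add] using h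
  have hfn : ∀ n, ∫ x in D, |v n x| ≤ C * ((∫ x in D, |f x|) + 1 / (n + 1)) ∧
      ∫ x in D, ‖gradient (v n) x‖ ≤ C * ((∫ x in D, |f x|) + 1 / (n + 1)) := by
    intro n
    have hf0 : 0 ≤ ∫ x in D, |f x| := integral_nonneg fun x => abs_nonneg _
    refine hapriori (v n) (hv n) _ (by positivity) fun φ hφ B hB => ?_
    have hB0 : 0 ≤ B := (abs_nonneg _).trans (hB x₀ hx₀)
    have h1 : |∫ x in D, f x * φ x| ≤ (∫ x in D, |f x|) * B := by
      rw [← integral_mul_const, ← Real.norm_eq_abs]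
      refine norm_integral_le_of_norm_le (hf.abs.mul_const B) ?_
      filter_upwards [ae_restrict_mem hD] with x hx
      rw [norm_mul, Real.norm_eq_abs, Real.norm_eq_abs]
      exact mul_le_mul_of_nonneg_left (hB x hx) (abs_nonneg _)
    have h2 := hform n φ hφ B hB0 hB
    set A := ∫ x in D, (inner ℝ (gradient (v n) x) (gradient φ x) + v n x * φ x)
    have hQ := Real.sqrt_nonneg (∫ x in D, ‖gradient φ x‖ ^ 2)
    have h3 : |A| ≤ |A - ∫ x in D, f x * φ x| + |∫ x in D, f x * φ x| := by
      simpa using abs_sub_le A (∫ x in D, f x * φ x) 0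
    nlinarith [mul_nonneg hf0 hQ]
  have hClim : Filter.Tendsto (fun n : ℕ => C * ((1 : ℝ) / (n + 1))) Filter.atTop (nhds 0) := by
    simpa using hδlim.const_mul C
  obtain ⟨u, hu, hulim⟩ := exists_tendsto_integral_norm_sub hvi hClim fun n k => (hcauchy n k).1
  obtain ⟨U, hU, hUlim⟩ := exists_tendsto_integral_norm_sub hgi hClim fun n k => (hcauchy n k).2
  have hlim : Filter.Tendsto (fun n : ℕ => C * ((∫ x in D, |f x|) + (1 : ℝ) / (n + 1)))
      Filter.atTop (nhds (C * ∫ x in D, |f x|)) := by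
    simpa using (hδlim.const_add (∫ x in D, |f x|)).const_mul C
  have hunorm := integral_norm_le_of_tendsto hvi hu hulim hlim fun n => (hfn n).1
  have hUnorm := integral_norm_le_of_tendsto hgi hU hUlim hlim fun n => (hfn n).2
  have hbdd : ∀ {V : Type} [NormedAddCommGroup V] {Ξ : EuclideanSpace ℝ (Fin 2) → V},
      Continuous Ξ → ∃ B, ∀ᵐ x ∂volume.restrict D, ‖Ξ x‖ ≤ B := fun hΞ => by
    obtain ⟨B, hB⟩ := hb.isCompact_closure.exists_bound_of_continuousOn hΞ.continuousOn
    exact ⟨B, (ae_restrict_mem hD).mono fun x hx => hB x (subset_closure hx)⟩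
  have htendu : ∀ {ξ : EuclideanSpace ℝ (Fin 2) → ℝ}, Continuous ξ →
      Filter.Tendsto (fun n => ∫ x in D, v n x * ξ x) Filter.atTop
        (nhds (∫ x in D, u x * ξ x)) := fun {ξ} hξ => by
    obtain ⟨B, hB⟩ := hbdd hξ
    simpa [mul_comm] using tendsto_integral_inner_of_tendsto_integral_norm_sub hvi hu
      hξ.aestronglyMeasurable hB hulim
  have htendU : ∀ {Ξ : EuclideanSpace ℝ (Fin 2) → EuclideanSpace ℝ (Fin 2)}, Continuous Ξ →
      Filter.Tendsto (fun n => ∫ x in D, inner ℝ (gradient (v n) x) (Ξ x)) Filter.atTop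
        (nhds (∫ x in D, inner ℝ (U x) (Ξ x))) := fun {Ξ} hΞ => by
    obtain ⟨B, hB⟩ := hbdd hΞ
    exact tendsto_integral_inner_of_tendsto_integral_norm_sub hgi hU
      hΞ.aestronglyMeasurable hB hUlim
  have hDu : Integrable (fun x i => U x i) (volume.restrict D) :=
    Integrable.of_eval fun i => hU.eval_piLp i
  refine ⟨u, fun x i => U x i, ?_, hu, hDu, ?_, ?_⟩
  · intro φ hφ hs hsD i
    have h1 := htendu (ξ := fun x => fderiv ℝ φ x (EuclideanSpace.single i (1 : ℝ)))
      ((hφ.continuous_fderiv (by simp)).clm_apply continuous_const)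
    have h2 := htendU (Ξ := fun x => φ x • EuclideanSpace.single i (1 : ℝ))
      (hφ.continuous.smul continuous_const)
    simp only [inner_smul_right, EuclideanSpace.inner_single_right, conj_trivial, one_mul,
      gradient_apply] at h2
    refine tendsto_nhds_unique h1 ?_
    simp only [setIntegral_mul_fderiv_eq_neg (hv _) hφ hs hsD]
    simpa only [mul_comm] using h2.neg
  · intro φ hφ
    have hφg := continuous_gradient hφ
    have h1 := (htendU hφg).add (htendu hφ.continuous)
    obtain ⟨B, hB⟩ := hb.isCompact_closure.exists_bound_of_continuousOn hφ.continuous.continuousOn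
    have hBD : ∀ x ∈ D, |φ x| ≤ B := fun x hx => hB x (subset_closure hx)
    have hB0 : 0 ≤ B := (abs_nonneg _).trans (hBD x₀ hx₀)
    obtain ⟨B', hB'⟩ := hbdd hφg
    have hUφ : IntegrableOn (fun x => inner ℝ (U x) (gradient φ x)) D := by
      refine (hU.norm.mul_const B').mono' (hU.aestronglyMeasurable.inner
        hφg.aestronglyMeasurable) ?_
      filter_upwards [hB'] with x hx
      exact (norm_inner_le_norm _ _).trans (by gcongr)
    have huφ : IntegrableOn (fun x => u x * φ x) D :=
      hu.mul_bdd hφ.continuous.aestronglyMeasurable ((ae_restrict_mem hD).mono hBD)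
    simp only [← inner_eq_sum_mul_fderiv]
    rw [integral_add hUφ huφ]
    refine tendsto_nhds_unique h1 ?_
    rw [tendsto_iff_norm_sub_tendsto_zero]
    refine squeeze_zero (fun n => norm_nonneg _) (fun n => ?_)
      (by simpa using hδlim.mul_const (B + √(∫ x in D, ‖gradient φ x‖ ^ 2)))
    have h2 := hform n φ hφ B hB0 hBD
    have hgφ : IntegrableOn (fun x => inner ℝ (gradient (v n) x) (gradient φ x)) D :=
      integrableOn_of_continuous_of_isBounded hb ((continuous_gradient (hv n)).inner hφg)
    have hvφ : IntegrableOn (fun x => v n x * φ x) D :=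
      integrableOn_of_continuous_of_isBounded hb ((hv n).continuous.mul hφ.continuous)
    rw [integral_add hgφ hvφ, one_div] at h2
    exact h2
  · have e : ∀ {V : Type} [NormedAddCommGroup V] {g : EuclideanSpace ℝ (Fin 2) → V},
        Integrable g (volume.restrict D) →
        (eLpNorm g 1 (volume.restrict D)).toReal = ∫ x in D, ‖g x‖ := fun hg => by
      rw [eLpNorm_one_eq_lintegral_enorm, integral_norm_eq_lintegral_enorm hg.aestronglyMeasurable]
    rw [e hu, e hDu, e hf]
    have hDuU : ∫ x in D, ‖fun i => U x i‖ ≤ ∫ x in D, ‖U x‖ :=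
      integral_mono hDu.norm hU.norm fun x =>
        (pi_norm_le_iff_of_nonneg (norm_nonneg _)).2 fun i => PiLp.norm_apply_le (U x) i
    simp only [Real.norm_eq_abs] at hunorm ⊢
    linarith
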